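/- Let G : ℝ⁶ → Mat₆(ℝ) be the matrix-valued polynomial map defined by the explicit Monge metric of the Oriented Associativity equation. Then for all q ∈ ℝ⁶: (i) G(q) is symmetric; (ii) every entry of G is a polynomial in q¹,…,q⁶ of degree at most 2; (iii) the cyclic condition ∂G_{ij}/∂q^k + ∂G_{jk}/∂q^i + ∂G_{ki}/∂q^j = 0 holds for all indices i, j, k ∈ {1,…,6}. -/

import Mathlib

/-- Partial derivative in direction `k` for functions on `ℝ⁶`. -/
noncomputable def pd (k : Fin 6) (f : (Fin 6 → ℝ) → ℝ) (x : Fin 6 → ℝ) : ℝ :=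
  fderiv ℝ f x (Pi.single k 1)

/-- The Monge metric `G(q)` of the Oriented Associativity equation
(0-based indices: `q i = qⁱ⁺¹`). -/
def G (q : Fin 6 → ℝ) : Matrix (Fin 6) (Fin 6) ℝ :=
  !![2, 0, q 2, -q 4, 2 * q 3, 0;
     0, 0, 2 * q 4, 0, -q 2 + 2 * q 5, -q 4;
     q 2, 2 * q 4, -2 * (q 0 + q 3 * q 4), q 4 * (q 2 - q 5),
       -q 1 + q 3 * (q 2 - q 5), 2 * q 3 * q 4;
     -q 4, 0, q 4 * (q 2 - q 5), 2 * (q 4) ^ 2,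
       -q 0 + q 2 * (-q 2 + 2 * q 5) - 2 * q 3 * q 4 - (q 5) ^ 2, q 4 * (-q 2 + q 5);
     2 * q 3, -q 2 + 2 * q 5, -q 1 + q 3 * (q 2 - q 5),
       -q 0 + q 2 * (-q 2 + 2 * q 5) - 2 * q 3 * q 4 - (q 5) ^ 2, 2 * (q 3) ^ 2,
       -q 1 + q 3 * (-q 2 + q 5);
     0, -q 4, 2 * q 3 * q 4, q 4 * (-q 2 + q 5), -q 1 + q 3 * (-q 2 + q 5),
       -2 * q 3 * q 4]

open MvPolynomial in
noncomputable def PM : Matrix (Fin 6) (Fin 6) (MvPolynomial (Fin 6) ℝ) :=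
  !![2, 0, X 2, -X 4, 2 * X 3, 0;
     0, 0, 2 * X 4, 0, -X 2 + 2 * X 5, -X 4;
     X 2, 2 * X 4, -2 * (X 0 + X 3 * X 4), X 4 * (X 2 - X 5),
       -X 1 + X 3 * (X 2 - X 5), 2 * X 3 * X 4;
     -X 4, 0, X 4 * (X 2 - X 5), 2 * (X 4) ^ 2,
       -X 0 + X 2 * (-X 2 + 2 * X 5) - 2 * X 3 * X 4 - (X 5) ^ 2, X 4 * (-X 2 + X 5);
     2 * X 3, -X 2 + 2 * X 5, -X 1 + X 3 * (X 2 - X 5),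
       -X 0 + X 2 * (-X 2 + 2 * X 5) - 2 * X 3 * X 4 - (X 5) ^ 2, 2 * (X 3) ^ 2,
       -X 1 + X 3 * (-X 2 + X 5);
     0, -X 4, 2 * X 3 * X 4, X 4 * (-X 2 + X 5), -X 1 + X 3 * (-X 2 + X 5),
       -2 * X 3 * X 4]

theorem G_eq_PM (q : Fin 6 → ℝ) (i j : Fin 6) : G q i j = MvPolynomial.eval q (PM i j) := by
  fin_cases i <;> fin_cases j <;> simp [G, PM]

theorem hasFDerivAt_eval (P : MvPolynomial (Fin 6) ℝ) (q : Fin 6 → ℝ) :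
    DifferentiableAt ℝ (fun x => MvPolynomial.eval x P) q ∧
    ∀ k, pd k (fun x => MvPolynomial.eval x P) q
      = MvPolynomial.eval q (MvPolynomial.pderiv k P) := by
  induction P using MvPolynomial.induction_on with
  | C a => simp [pd]
  | add p r hp hr =>
    simp only [map_add]
    refine ⟨hp.1.add hr.1, fun k => ?_⟩
    rw [← hp.2 k, ← hr.2 k]
    simp only [pd]
    rw [fderiv_fun_add hp.1 hr.1]
    rfl
  | mul_X p i hp =>
    have hX : HasFDerivAt (fun x : Fin 6 → ℝ => x i)
      (ContinuousLinearMap.proj (R := ℝ) (φ := fun _ : Fin 6 => ℝ) i) q := hasFDerivAt_apply i q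
    simp only [map_mul, MvPolynomial.eval_X]
    refine ⟨hp.1.mul hX.differentiableAt, fun k => ?_⟩
    have := hp.2 k
    simp only [pd] at this ⊢
    rw [fderiv_fun_mul hp.1 hX.differentiableAt, hX.fderiv]
    simp [MvPolynomial.pderiv_mul, MvPolynomial.pderiv_X, this, Pi.single_apply]
    by_cases h : i = k
    · subst h
      simp
      try ring
    · simp [h, Ne.symm h]
      try ring

theorem tdX (i : Fin 6) : (MvPolynomial.X i : MvPolynomial (Fin 6) ℝ).totalDegree ≤ 1 :=
  (MvPolynomial.totalDegree_X i).le

theorem td_add {a b : MvPolynomial (Fin 6) ℝ} {n : ℕ} (ha : a.totalDegree ≤ n)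
    (hb : b.totalDegree ≤ n) : (a + b).totalDegree ≤ n :=
  (MvPolynomial.totalDegree_add a b).trans (max_le ha hb)

theorem td_sub {a b : MvPolynomial (Fin 6) ℝ} {n : ℕ} (ha : a.totalDegree ≤ n)
    (hb : b.totalDegree ≤ n) : (a - b).totalDegree ≤ n :=
  (MvPolynomial.totalDegree_sub a b).trans (max_le ha hb)

theorem td_neg {a : MvPolynomial (Fin 6) ℝ} {n : ℕ} (ha : a.totalDegree ≤ n) :
    (-a).totalDegree ≤ n := by rwa [MvPolynomial.totalDegree_neg]

theorem td_two (n : ℕ) : (2 : MvPolynomial (Fin 6) ℝ).totalDegree ≤ n := by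
  have : (2 : MvPolynomial (Fin 6) ℝ) = MvPolynomial.C 2 :=
      (map_ofNat MvPolynomial.C 2).symm
  rw [this, MvPolynomial.totalDegree_C]
  exact Nat.zero_le _

theorem td_zero (n : ℕ) : (0 : MvPolynomial (Fin 6) ℝ).totalDegree ≤ n := by simp

theorem td_mul {a b : MvPolynomial (Fin 6) ℝ} (ha : a.totalDegree ≤ 1)
    (hb : b.totalDegree ≤ 1) : (a * b).totalDegree ≤ 2 :=
  (MvPolynomial.totalDegree_mul a b).trans (add_le_add ha hb)

theorem td_sq {a : MvPolynomial (Fin 6) ℝ} (ha : a.totalDegree ≤ 1) :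
    (a ^ 2).totalDegree ≤ 2 := by
  rw [sq]; exact td_mul ha ha

theorem td_two_mul {a : MvPolynomial (Fin 6) ℝ} {n : ℕ} (ha : a.totalDegree ≤ n) :
    (2 * a).totalDegree ≤ n :=
  (MvPolynomial.totalDegree_mul 2 a).trans (by have := td_two 0; omega)

theorem td_neg_two_mul {a : MvPolynomial (Fin 6) ℝ} {n : ℕ} (ha : a.totalDegree ≤ n) :
    (-2 * a).totalDegree ≤ n := by
  rw [neg_mul]; exact td_neg (td_two_mul ha)

theorem tdX2 (i : Fin 6) : (MvPolynomial.X i : MvPolynomial (Fin 6) ℝ).totalDegree ≤ 2 :=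
  (tdX i).trans one_le_two

set_option maxHeartbeats 4000000 in
theorem PM_deg (i j : Fin 6) : (PM i j).totalDegree ≤ 2 := by
  fin_cases i <;> fin_cases j <;> simp [PM, -neg_add_rev] <;>
  repeat' first
    | with_reducible exact td_two _
    | with_reducible exact td_zero _
    | with_reducible exact tdX _
    | with_reducible exact tdX2 _
    | with_reducible apply td_two_mul
    | with_reducible apply td_neg_two_mul
    | with_reducible apply td_neg
    | with_reducible apply td_add
    | with_reducible apply td_sub
    | with_reducible apply td_sq
    | with_reducible apply td_mul

theorem PM_symm (i j : Fin 6) : PM i j = PM j i := by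
  fin_cases i <;> fin_cases j <;> rfl

set_option maxHeartbeats 4000000 in
theorem PM_cyc (i j k : Fin 6) (q : Fin 6 → ℝ) :
    MvPolynomial.eval q (MvPolynomial.pderiv k (PM i j)) +
    MvPolynomial.eval q (MvPolynomial.pderiv i (PM j k)) +
    MvPolynomial.eval q (MvPolynomial.pderiv j (PM k i)) = 0 := by
  have h2 : ∀ k : Fin 6, MvPolynomial.pderiv k (2 : MvPolynomial (Fin 6) ℝ) = 0 := by
    intro k
    have : (2 : MvPolynomial (Fin 6) ℝ) = MvPolynomial.C 2 :=
      (map_ofNat MvPolynomial.C 2).symm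
    rw [this, MvPolynomial.pderiv_C]
  fin_cases i <;> fin_cases j <;> fin_cases k <;>
    simp [PM, MvPolynomial.pderiv_mul, MvPolynomial.pderiv_X, Pi.single_apply, h2, sq] <;> ring

/-- the Monge metric `G(q)` is symmetric, its entries are polynomials of
degree at most 2 in `q¹,…,q⁶`, and it satisfies the cyclic condition
`G_{ij,k} + G_{jk,i} + G_{ki,j} = 0`. -/
theorem statement7 :
    (∀ q : Fin 6 → ℝ, (G q).IsSymm) ∧
    (∀ i j : Fin 6, ∃ P : MvPolynomial (Fin 6) ℝ,
      P.totalDegree ≤ 2 ∧ ∀ q : Fin 6 → ℝ, G q i j = MvPolynomial.eval q P) ∧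
    (∀ (i j k : Fin 6) (q : Fin 6 → ℝ),
      pd k (fun x => G x i j) q + pd i (fun x => G x j k) q + pd j (fun x => G x k i) q
        = 0) := by
  refine ⟨fun q => ?_, fun i j => ⟨PM i j, PM_deg i j, fun q => G_eq_PM q i j⟩,
    fun i j k q => ?_⟩
  · refine Matrix.IsSymm.ext fun i j => ?_
    rw [G_eq_PM, G_eq_PM, PM_symm]
  · simp only [G_eq_PM]
    rw [(hasFDerivAt_eval _ q).2, (hasFDerivAt_eval _ q).2, (hasFDerivAt_eval _ q).2]
    exact PM_cyc i j k q
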